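/- Let α>0 and 0≤θ<α. Then H_α(x)=∫_{[0,x]} y^α dF(y) is regularly varying with index θ at infinity if and only if x^α (1−F(x)) / H_α(x) → θ/(α−θ) as x→∞. -/

import Mathlib

open MeasureTheory Set Filter Topology

/-- The cumulative distribution function of a measure `μ` on `ℝ`. -/
noncomputable def distF (μ : Measure ℝ) (x : ℝ) : ℝ := (μ (Iic x)).toReal

/-- Truncated `α`-th moment `H_α(x) = ∫_{[0,x]} y^α dF(y)`. -/
noncomputable def Htr (μ : Measure ℝ) (α x : ℝ) : ℝ := ∫ y in Iic x, y ^ α ∂μ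

/-- `W_α(x) = ∫_0^x y^(α-1) (1 - F(y)) dy` (Lebesgue integral). -/
noncomputable def Wtr (μ : Measure ℝ) (α x : ℝ) : ℝ :=
  ∫ y in Ioc (0:ℝ) x, y ^ (α - 1) * (1 - distF μ y)

/-- The Williamson transform `G_α(x) = ∫_{[0,x]} (1 - (t/x)^α) dF(t)`. -/
noncomputable def Gw (μ : Measure ℝ) (α x : ℝ) : ℝ := ∫ t in Iic x, (1 - (t / x) ^ α) ∂μ

/-- `g` is regularly varying at infinity with index `ρ`. -/
def RegVary (g : ℝ → ℝ) (ρ : ℝ) : Prop :=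
  ∀ t : ℝ, 0 < t → Tendsto (fun x => g (t * x) / g x) atTop (𝓝 (t ^ ρ))

/-!
Integrating `dH = -x ^ α dT`, where `T = 1 - F`, over an interval gives the single inequality
`x ^ α * (T x - T y) ≤ H y - H x`, valid for `x` and `y` in either order.

If `H` varies regularly with index `θ`, compare `x ^ α * T x / H x` with a number `M` through
`u x = T x - M * H x / x ^ α`, which tends to `0`. The inequality shows that `u x ≤ u (t * x)` for
large `x` as soon as `t ^ θ * (1 + M * t ^ (-α)) < 1 + M`. The two sides agree at `t = 1`, and the
left one has derivative `θ - M * (α - θ)` there. If `M > θ / (α - θ)`, some `t > 1` is therefore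
admissible, and iterating towards infinity gives `u ≤ 0`; if `M < θ / (α - θ)`, some `t < 1` is,
and iterating backwards from infinity gives `u ≥ 0`.

Conversely, let `U x = H x + x ^ α * T x` and `V x = x ^ α * T x / U x`. The inequality gives
`U (s * x) ≤ exp ((s ^ α - 1) * V x) * U x`. If `V` tends to `κ`, then `n` steps with
`s = t ^ (1 / n)` bound the upper limit of `U (t * x) / U x` by `exp (n * (t ^ (α / n) - 1) * κ)`,
hence by `t ^ (α * κ)` as `n` grows; replacing `t` by `1 / t` bounds the lower limit.
-/

theorem eventually_pow_mul_le_exp_sum {U V : ℝ → ℝ} {s a : ℝ} (hs : 0 < s)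
    (h : ∀ᶠ x in atTop, U (s * x) ≤ Real.exp (a * V x) * U x) (n : ℕ) :
    ∀ᶠ x in atTop, U (s ^ n * x) ≤ Real.exp (a * ∑ k ∈ Finset.range n, V (s ^ k * x)) * U x := by
  induction n with
  | zero => simp
  | succ n ih =>
    have hscale : Tendsto (fun x => s ^ n * x) atTop atTop :=
      tendsto_id.const_mul_atTop (pow_pos hs n)
    filter_upwards [ih, hscale.eventually h] with x hn hstep
    calc U (s ^ (n + 1) * x) = U (s * (s ^ n * x)) := by rw [pow_succ', mul_assoc]
      _ ≤ Real.exp (a * V (s ^ n * x)) * U (s ^ n * x) := hstep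
      _ ≤ Real.exp (a * V (s ^ n * x)) *
          (Real.exp (a * ∑ k ∈ Finset.range n, V (s ^ k * x)) * U x) := by gcongr
      _ = Real.exp (a * ∑ k ∈ Finset.range (n + 1), V (s ^ k * x)) * U x := by
        rw [← mul_assoc, ← Real.exp_add, Finset.sum_range_succ]
        ring_nf

theorem tendsto_nat_mul_rpow_div_sub_one {t α : ℝ} (ht : 0 < t) (hα : 0 < α) :
    Tendsto (fun n : ℕ => n * (t ^ (α / n) - 1)) atTop (𝓝 (α * Real.log t)) := by
  have hdiv : Tendsto (fun n : ℕ => α / (n : ℝ)) atTop (𝓝[>] 0) :=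
    tendsto_nhdsWithin_iff.2 ⟨tendsto_const_div_atTop_nhds_zero_nat α, by
      filter_upwards [eventually_gt_atTop 0] with n hn
      exact div_pos hα (Nat.cast_pos.2 hn)⟩
  refine (((tendsto_rpow_sub_one_log ht).comp hdiv).const_mul α).congr fun n => ?_
  simp only [Function.comp_apply, inv_div]
  field_simp

namespace RegVary

variable {f g U V : ℝ → ℝ} {ρ l α κ : ℝ}

theorem of_eventually_div_lt (hg : ∀ᶠ x in atTop, 0 < g x)
    (h : ∀ t, 0 < t → ∀ b, t ^ ρ < b → ∀ᶠ x in atTop, g (t * x) / g x < b) : RegVary g ρ := by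
  intro t ht
  have hscale : Tendsto (fun x => t * x) atTop atTop := tendsto_id.const_mul_atTop ht
  refine tendsto_order.2 ⟨fun a ha => ?_, h t ht⟩
  rcases le_or_gt a 0 with ha0 | ha0
  · filter_upwards [hg, hscale.eventually hg] with x hx htx
    exact ha0.trans_lt (div_pos htx hx)
  · have hinv : t⁻¹ ^ ρ < a⁻¹ := by
      rw [Real.inv_rpow ht.le]
      exact inv_strictAnti₀ ha0 ha
    filter_upwards [hg, hscale.eventually hg, hscale.eventually (h t⁻¹ (inv_pos.2 ht) _ hinv)]
      with x hx htx hlt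
    rw [inv_mul_cancel_left₀ ht.ne', ← inv_div] at hlt
    exact (inv_lt_inv₀ (div_pos htx hx) ha0).1 hlt

theorem of_tendsto_div (hg : RegVary g ρ) (hg0 : ∀ᶠ x in atTop, g x ≠ 0)
    (hfg : Tendsto (fun x => f x / g x) atTop (𝓝 l)) (hl : l ≠ 0) : RegVary f ρ := by
  intro t ht
  have hscale : Tendsto (fun x => t * x) atTop atTop := tendsto_id.const_mul_atTop ht
  have hlim := (hg t ht).mul ((hfg.comp hscale).div hfg hl)
  rw [div_self hl, mul_one] at hlim
  refine hlim.congr' ?_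
  filter_upwards [hg0, hscale.eventually hg0] with x hx htx
  simp only [Function.comp_apply, Pi.div_apply]
  field_simp

theorem of_le_exp (hα : 0 < α) (hU : ∀ᶠ x in atTop, 0 < U x) (hV : Tendsto V atTop (𝓝 κ))
    (h : ∀ s, 0 < s → ∀ᶠ x in atTop, U (s * x) ≤ Real.exp ((s ^ α - 1) * V x) * U x) :
    RegVary U (α * κ) := by
  refine of_eventually_div_lt hU fun t ht b hb => ?_
  have hexp : Tendsto (fun n : ℕ => Real.exp (n * (t ^ (α / n) - 1) * κ)) atTop
      (𝓝 (t ^ (α * κ))) := by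
    rw [Real.rpow_def_of_pos ht, mul_left_comm, ← mul_assoc]
    exact (Real.continuous_exp.tendsto _).comp
      ((tendsto_nat_mul_rpow_div_sub_one ht hα).mul_const κ)
  obtain ⟨n, hnb, hn⟩ := ((hexp.eventually_lt_const hb).and (eventually_ne_atTop 0)).exists
  set s := t ^ (n : ℝ)⁻¹
  have hs : 0 < s := Real.rpow_pos_of_pos ht _
  have hsn : s ^ n = t := Real.rpow_inv_natCast_pow ht.le hn
  have hsα : s ^ α = t ^ (α / n) := by rw [← Real.rpow_mul ht.le, mul_comm, div_eq_mul_inv]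
  have hsum : Tendsto (fun x => ∑ k ∈ Finset.range n, V (s ^ k * x)) atTop (𝓝 (n * κ)) := by
    simpa using tendsto_finsetSum (Finset.range n) fun k _ =>
      hV.comp (tendsto_id.const_mul_atTop (pow_pos hs k))
  have hbound : Tendsto
      (fun x => Real.exp ((s ^ α - 1) * ∑ k ∈ Finset.range n, V (s ^ k * x))) atTop
      (𝓝 (Real.exp (n * (t ^ (α / n) - 1) * κ))) := by
    rw [show n * (t ^ (α / n) - 1) * κ = (s ^ α - 1) * (n * κ) by rw [hsα]; ring]
    exact (Real.continuous_exp.tendsto _).comp (hsum.const_mul _)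
  filter_upwards [hU, eventually_pow_mul_le_exp_sum hs (h s hs) n, hbound.eventually_lt_const hnb]
    with x hx hle hlt
  rw [hsn] at hle
  exact ((div_le_iff₀ hx).2 hle).trans_lt hlt

end RegVary

section ScalingMonotone

variable {u : ℝ → ℝ} {t : ℝ}

theorem eventually_nonpos_of_le_comp_mul_left (ht : 1 < t)
    (h : ∀ᶠ x in atTop, u x ≤ u (t * x)) (hu : Tendsto u atTop (𝓝 0)) :
    ∀ᶠ x in atTop, u x ≤ 0 := by
  obtain ⟨x₀, hx₀⟩ := eventually_atTop.1 (h.and (eventually_gt_atTop 0))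
  filter_upwards [eventually_ge_atTop x₀] with x hx
  have hx_pos : 0 < x := (hx₀ x hx).2
  have hiter : ∀ n : ℕ, u x ≤ u (t ^ n * x) := by
    intro n
    induction n with
    | zero => simp
    | succ n ih =>
      have hge : x₀ ≤ t ^ n * x :=
        hx.trans (le_mul_of_one_le_left hx_pos.le (one_le_pow₀ ht.le))
      rw [pow_succ', mul_assoc]
      exact ih.trans (hx₀ _ hge).1
  exact ge_of_tendsto'
    (hu.comp ((tendsto_pow_atTop_atTop_of_one_lt ht).atTop_mul_const hx_pos)) hiter

theorem eventually_nonneg_of_le_comp_mul_left (ht₀ : 0 < t) (ht₁ : t < 1)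
    (h : ∀ᶠ x in atTop, u x ≤ u (t * x)) (hu : Tendsto u atTop (𝓝 0)) :
    ∀ᶠ x in atTop, 0 ≤ u x := by
  have hscale : Tendsto (fun x => t⁻¹ * x) atTop atTop :=
    tendsto_id.const_mul_atTop (inv_pos.2 ht₀)
  have hneg : ∀ᶠ x in atTop, -u x ≤ -u (t⁻¹ * x) := by
    filter_upwards [hscale.eventually h] with x hx
    rwa [mul_inv_cancel_left₀ ht₀.ne', ← neg_le_neg_iff] at hx
  filter_upwards [eventually_nonpos_of_le_comp_mul_left ((one_lt_inv₀ ht₀).2 ht₁) hneg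
    (by simpa using hu.neg)] with x hx
  exact neg_nonpos.1 hx

end ScalingMonotone

section CriticalConstant

variable {α θ M : ℝ}

theorem hasDerivAt_rpow_mul_one_add_mul_rpow_neg (α θ M : ℝ) :
    HasDerivAt (fun t : ℝ => t ^ θ * (1 + M * t ^ (-α)) - (1 + M)) (θ - M * (α - θ)) 1 := by
  have hpow (p : ℝ) : HasDerivAt (fun t : ℝ => t ^ p) p 1 := by
    simpa using Real.hasDerivAt_rpow_const (x := 1) (p := p) (Or.inl one_ne_zero)
  convert! ((hpow θ).mul (((hpow (-α)).const_mul M).const_add 1)).sub_const (1 + M) using 1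
  simp only [Real.one_rpow]
  ring

theorem exists_one_lt_rpow_mul_one_add_lt (hθα : θ < α) (hM : θ / (α - θ) < M) :
    ∃ t : ℝ, 1 < t ∧ t ^ θ * (1 + M * t ^ (-α)) < 1 + M := by
  have hderiv := hasDerivAt_rpow_mul_one_add_mul_rpow_neg α θ M
  have hneg : θ - M * (α - θ) < 0 := sub_neg.2 ((div_lt_iff₀ (sub_pos.2 hθα)).1 hM)
  have hsign := eventually_nhdsWithin_sign_eq_of_deriv_neg (hderiv.deriv ▸ hneg) (by simp)
  obtain ⟨t, hsign, ht⟩ :=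
    ((hsign.filter_mono nhdsWithin_le_nhds).and (self_mem_nhdsWithin (s := Ioi 1))).exists
  rw [sign_neg (sub_neg.2 ht), sign_eq_neg_one_iff, sub_neg] at hsign
  exact ⟨t, ht, hsign⟩

theorem exists_lt_one_rpow_mul_one_add_lt (hθα : θ < α) (hM : M < θ / (α - θ)) :
    ∃ t : ℝ, 0 < t ∧ t < 1 ∧ t ^ θ * (1 + M * t ^ (-α)) < 1 + M := by
  have hderiv := hasDerivAt_rpow_mul_one_add_mul_rpow_neg α θ M
  have hpos : 0 < θ - M * (α - θ) := sub_pos.2 ((lt_div_iff₀ (sub_pos.2 hθα)).1 hM)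
  have hsign := eventually_nhdsWithin_sign_eq_of_deriv_pos (hderiv.deriv ▸ hpos) (by simp)
  obtain ⟨t, hsign, ht⟩ := ((hsign.filter_mono nhdsWithin_le_nhds).and
    (Ioo_mem_nhdsLT zero_lt_one)).exists
  rw [sign_neg (sub_neg.2 ht.2), sign_eq_neg_one_iff, sub_neg] at hsign
  exact ⟨t, ht.1, ht.2, hsign⟩

end CriticalConstant

/-- `H` is a truncated `α`-th moment function for the tail function `T`, that is,
`dH = -x ^ α dT` on `(0, ∞)`, encoded by its integrated form. The order of `x` and `y` is
arbitrary, so the definition bounds the increments of `H` from both sides. -/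
def IsTruncatedMoment (α : ℝ) (H T : ℝ → ℝ) : Prop :=
  ∀ ⦃x y : ℝ⦄, 0 < x → 0 < y → x ^ α * (T x - T y) ≤ H y - H x

/-- The censored `α`-th moment `H x + x ^ α * T x`. If `H` and `T` are the truncated `α`-th moment
and the tail of a random variable `X`, it is the mean of `min X x ^ α`. -/
noncomputable def censoredMoment (α : ℝ) (H T : ℝ → ℝ) (x : ℝ) : ℝ := H x + x ^ α * T x

namespace IsTruncatedMoment

variable {α θ M : ℝ} {H T : ℝ → ℝ}

theorem tendsto_div_rpow (h : IsTruncatedMoment α H T) (hα : 0 < α)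
    (hT : Tendsto T atTop (𝓝 0)) (hH : ∀ᶠ x in atTop, 0 < H x) :
    Tendsto (fun x => H x / x ^ α) atTop (𝓝 0) := by
  refine tendsto_order.2 ⟨fun a ha => ?_, fun b hb => ?_⟩
  · filter_upwards [hH, eventually_gt_atTop 0] with x hHx hx
    exact ha.trans (div_pos hHx (Real.rpow_pos_of_pos hx α))
  · obtain ⟨a, hTa, ha⟩ := ((hT.eventually_lt_const hb).and (eventually_gt_atTop 0)).exists
    have hbound : Tendsto (fun x => H a / x ^ α + (T a - T x)) atTop (𝓝 (0 + (T a - 0))) :=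
      ((tendsto_rpow_atTop hα).const_div_atTop (H a)).add (hT.const_sub (T a))
    rw [zero_add, sub_zero] at hbound
    filter_upwards [hbound.eventually_lt_const hTa, eventually_gt_atTop 0] with x hlt hx
    have hxα : 0 < x ^ α := Real.rpow_pos_of_pos hx α
    refine lt_of_le_of_lt ?_ hlt
    rw [div_add' _ _ _ hxα.ne']
    gcongr
    linarith [h hx ha]

theorem eventually_tail_sub_le (h : IsTruncatedMoment α H T) (hH : ∀ᶠ x in atTop, 0 < H x)
    (hreg : RegVary H θ) {t : ℝ} (ht : 0 < t) (htM : t ^ θ * (1 + M * t ^ (-α)) < 1 + M) :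
    ∀ᶠ x in atTop,
      T x - M * (H x / x ^ α) ≤ T (t * x) - M * (H (t * x) / (t * x) ^ α) := by
  filter_upwards [((hreg t ht).mul_const (1 + M * t ^ (-α))).eventually_lt_const htM, hH,
    eventually_gt_atTop 0] with x hlt hHx hx
  have hxα : 0 < x ^ α := Real.rpow_pos_of_pos hx α
  have htα : 0 < t ^ α := Real.rpow_pos_of_pos ht α
  have hgrowth : H (t * x) * (1 + M * t ^ (-α)) < (1 + M) * H x := by
    rwa [div_mul_eq_mul_div, div_lt_iff₀ hHx] at hlt
  have hincr := h hx (mul_pos ht hx)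
  have hdrop : T x - T (t * x) ≤ M * (H x - H (t * x) * t ^ (-α)) / x ^ α := by
    rw [le_div_iff₀ hxα]
    linarith
  have hsplit : M * (H x - H (t * x) * t ^ (-α)) / x ^ α =
      M * (H x / x ^ α) - M * (H (t * x) / (t * x) ^ α) := by
    rw [Real.mul_rpow ht.le hx.le, Real.rpow_neg ht.le]
    field_simp
  linarith

theorem tendsto_of_regVary (h : IsTruncatedMoment α H T) (hα : 0 < α) (hθα : θ < α)
    (hT : Tendsto T atTop (𝓝 0)) (hH : ∀ᶠ x in atTop, 0 < H x) (hreg : RegVary H θ) :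
    Tendsto (fun x => x ^ α * T x / H x) atTop (𝓝 (θ / (α - θ))) := by
  have hzero (M : ℝ) : Tendsto (fun x => T x - M * (H x / x ^ α)) atTop (𝓝 0) := by
    simpa using hT.sub ((h.tendsto_div_rpow hα hT hH).const_mul M)
  have hratio (x M : ℝ) (hHx : 0 < H x) (hx : 0 < x) :
      T x - M * (H x / x ^ α) = (x ^ α * T x / H x - M) * (H x / x ^ α) := by
    have := Real.rpow_pos_of_pos hx α
    field_simp
  refine tendsto_order.2 ⟨fun a ha => ?_, fun b hb => ?_⟩
  · obtain ⟨M, haM, hM⟩ := exists_between ha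
    obtain ⟨t, ht₀, ht₁, htM⟩ := exists_lt_one_rpow_mul_one_add_lt hθα hM
    filter_upwards [hH, eventually_gt_atTop 0, eventually_nonneg_of_le_comp_mul_left ht₀ ht₁
      (h.eventually_tail_sub_le hH hreg ht₀ htM) (hzero M)] with x hHx hx hu
    rw [hratio x M hHx hx] at hu
    have := nonneg_of_mul_nonneg_left hu (div_pos hHx (Real.rpow_pos_of_pos hx α))
    linarith
  · obtain ⟨M, hM, hMb⟩ := exists_between hb
    obtain ⟨t, ht, htM⟩ := exists_one_lt_rpow_mul_one_add_lt hθα hM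
    filter_upwards [hH, eventually_gt_atTop 0, eventually_nonpos_of_le_comp_mul_left ht
      (h.eventually_tail_sub_le hH hreg (zero_lt_one.trans ht) htM) (hzero M)] with x hHx hx hu
    rw [hratio x M hHx hx] at hu
    have := nonpos_of_mul_nonpos_left hu (div_pos hHx (Real.rpow_pos_of_pos hx α))
    linarith

theorem censoredMoment_mul_le (h : IsTruncatedMoment α H T) {s x : ℝ} (hs : 0 < s) (hx : 0 < x)
    (hU : 0 < censoredMoment α H T x) :
    censoredMoment α H T (s * x) ≤
      Real.exp ((s ^ α - 1) * (x ^ α * T x / censoredMoment α H T x)) *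
        censoredMoment α H T x := by
  have hincr := h (mul_pos hs hx) hx
  calc censoredMoment α H T (s * x)
      ≤ censoredMoment α H T x + (s ^ α - 1) * (x ^ α * T x) := by
        unfold censoredMoment
        rw [Real.mul_rpow hs.le hx.le] at hincr ⊢
        linarith
    _ = ((s ^ α - 1) * (x ^ α * T x / censoredMoment α H T x) + 1) *
          censoredMoment α H T x := by field_simp; ring
    _ ≤ _ := by gcongr; exact Real.add_one_le_exp _

theorem regVary_of_tendsto (h : IsTruncatedMoment α H T) (hα : 0 < α) (hθα : θ < α)
    (hT : ∀ x, 0 ≤ T x) (hH : ∀ᶠ x in atTop, 0 < H x)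
    (hlim : Tendsto (fun x => x ^ α * T x / H x) atTop (𝓝 (θ / (α - θ)))) :
    RegVary H θ := by
  have hαθ : 0 < α - θ := sub_pos.2 hθα
  have hU : ∀ᶠ x in atTop, 0 < censoredMoment α H T x := by
    filter_upwards [hH, eventually_gt_atTop 0] with x hHx hx
    exact add_pos_of_pos_of_nonneg hHx (mul_nonneg (Real.rpow_nonneg hx.le α) (hT x))
  have hHU : Tendsto (fun x => H x / censoredMoment α H T x) atTop (𝓝 ((α - θ) / α)) := by
    have hsum : 1 + θ / (α - θ) = α / (α - θ) := by field_simp; ring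
    have hinv := (hlim.const_add 1).inv₀ (by rw [hsum]; positivity)
    rw [hsum, inv_div] at hinv
    refine hinv.congr' ?_
    filter_upwards [hH] with x hHx
    rw [one_add_div hHx.ne', inv_div, censoredMoment]
  have hV : Tendsto (fun x => x ^ α * T x / censoredMoment α H T x) atTop (𝓝 (θ / α)) := by
    have hsub := hHU.const_sub 1
    rw [show 1 - (α - θ) / α = θ / α by field_simp; ring] at hsub
    refine hsub.congr' ?_
    filter_upwards [hU] with x hx
    rw [one_sub_div hx.ne', censoredMoment, add_sub_cancel_left]
  have hreg : RegVary (censoredMoment α H T) (α * (θ / α)) :=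
    RegVary.of_le_exp hα hU hV fun s hs => by
      filter_upwards [hU, eventually_gt_atTop 0] with x hUx hx
      exact h.censoredMoment_mul_le hs hx hUx
  rw [mul_div_cancel₀ θ hα.ne'] at hreg
  exact hreg.of_tendsto_div (hU.mono fun x hx => hx.ne') hHU (by positivity)

end IsTruncatedMoment

section Order

variable {X : Type*} [LinearOrder X] [TopologicalSpace X] [OrderClosedTopology X]
  [MeasurableSpace X] [OpensMeasurableSpace X] {μ : Measure X} {x y : X}

theorem tendsto_measureReal_Ioi_atTop [(atTop : Filter X).IsCountablyGenerated]
    (hfin : μ (Ioi x) ≠ ⊤) :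
    Tendsto (fun x => μ.real (Ioi x)) atTop (𝓝 0) := by
  have hempty : ⋂ x : X, Ioi x = ∅ :=
    eq_empty_of_forall_notMem fun y hy => lt_irrefl y (mem_iInter.1 hy y)
  have hlim := tendsto_measure_iInter_atTop (μ := μ) (s := fun x : X => Ioi x)
    (fun x => measurableSet_Ioi.nullMeasurableSet) (fun _ _ => Ioi_subset_Ioi) ⟨x, hfin⟩
  rw [hempty, measure_empty] at hlim
  simpa using! (ENNReal.tendsto_toReal ENNReal.zero_ne_top).comp hlim

theorem measureReal_Ioi_sub_Ioi (hfin : μ (Ioi x) ≠ ⊤) (hxy : x ≤ y) :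
    μ.real (Ioi x) - μ.real (Ioi y) = μ.real (Ioc x y) := by
  rw [← Ioc_union_Ioi_eq_Ioi hxy, measureReal_union (Ioc_disjoint_Ioi le_rfl) measurableSet_Ioi
    (measure_ne_top_of_subset Ioc_subset_Ioi_self hfin)
    (measure_ne_top_of_subset (Ioi_subset_Ioi hxy) hfin), add_sub_cancel_right]

end Order

section Measure

variable {μ : Measure ℝ} {α x y : ℝ}

theorem ae_pos_of_measure_Iic_zero (hsupp : μ (Iic 0) = 0) : ∀ᵐ y ∂μ, 0 < y := by
  filter_upwards [measure_eq_zero_iff_ae_notMem.1 hsupp] with y hy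
  exact not_le.1 hy

theorem integrable_min_one_rpow [IsFiniteMeasure μ] (hsupp : μ (Iic 0) = 0) (α : ℝ) :
    Integrable (fun y => min 1 (y ^ α)) μ := by
  refine Integrable.of_bound (by fun_prop) 1 ?_
  filter_upwards [ae_pos_of_measure_Iic_zero hsupp] with y hy
  rw [Real.norm_of_nonneg (le_min zero_le_one (Real.rpow_nonneg hy.le α))]
  exact min_le_left _ _

theorem measure_Ioi_ne_top (hα : 0 < α) (hint : Integrable (fun y => min 1 (y ^ α)) μ)
    (hx : 0 < x) : μ (Ioi x) ≠ ⊤ := by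
  refine ((measure_mono fun y hy => ?_).trans_lt (hint.measure_ge_lt_top
    (lt_min zero_lt_one (Real.rpow_pos_of_pos hx α)))).ne
  exact min_le_min le_rfl (Real.rpow_le_rpow hx.le (le_of_lt hy) hα.le)

theorem integrableOn_rpow_Iic (hsupp : μ (Iic 0) = 0) (hα : 0 < α)
    (hint : Integrable (fun y => min 1 (y ^ α)) μ) (x : ℝ) :
    IntegrableOn (fun y => y ^ α) (Iic x) μ := by
  refine (hint.const_mul (max 1 (x ^ α))).integrableOn.mono' (by fun_prop) ?_
  filter_upwards [ae_restrict_mem measurableSet_Iic,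
    ae_restrict_of_ae (ae_pos_of_measure_Iic_zero hsupp)] with y hyx hy
  have hyα : 0 ≤ y ^ α := Real.rpow_nonneg hy.le α
  rw [Real.norm_of_nonneg hyα, mul_min_of_nonneg _ _ (by positivity), mul_one]
  exact le_min (le_max_of_le_right (Real.rpow_le_rpow hy.le hyx hα.le))
    (le_mul_of_one_le_left hyα (le_max_left _ _))

theorem Htr_sub_Htr (hint : IntegrableOn (fun u => u ^ α) (Iic y) μ) (hxy : x ≤ y) :
    Htr μ α y - Htr μ α x = ∫ u in Ioc x y, u ^ α ∂μ := by
  rw [Htr, Htr, intervalIntegral.integral_Iic_sub_Iic (hint.mono_set (Iic_subset_Iic.2 hxy)) hint,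
    intervalIntegral.integral_of_le hxy]

theorem isTruncatedMoment_Htr (hsupp : μ (Iic 0) = 0) (hα : 0 < α)
    (hint : Integrable (fun y => min 1 (y ^ α)) μ) :
    IsTruncatedMoment α (Htr μ α) fun x => μ.real (Ioi x) := by
  intro x y hx hy
  have hpow := integrableOn_rpow_Iic hsupp hα hint
  have hfin {z : ℝ} (hz : 0 < z) : μ (Ioi z) ≠ ⊤ := measure_Ioi_ne_top hα hint hz
  have hIoc {a b : ℝ} (ha : 0 < a) : μ (Ioc a b) ≠ ⊤ :=
    measure_ne_top_of_subset Ioc_subset_Ioi_self (hfin ha)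
  rcases le_total x y with hxy | hyx
  · rw [measureReal_Ioi_sub_Ioi (hfin hx) hxy, Htr_sub_Htr (hpow y) hxy]
    exact setIntegral_ge_of_const_le_real measurableSet_Ioc (hIoc hx)
      (fun u hu => Real.rpow_le_rpow hx.le hu.1.le hα.le)
      ((hpow y).mono_set Ioc_subset_Iic_self)
  · have hle : ∫ u in Ioc y x, u ^ α ∂μ ≤ ∫ _ in Ioc y x, x ^ α ∂μ :=
      setIntegral_mono_on ((hpow x).mono_set Ioc_subset_Iic_self)
        (integrableOn_const (hIoc hy)) measurableSet_Ioc
        fun u hu => Real.rpow_le_rpow (hy.le.trans hu.1.le) hu.2 hα.le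
    rw [setIntegral_const, smul_eq_mul, ← measureReal_Ioi_sub_Ioi (hfin hy) hyx,
      ← Htr_sub_Htr (hpow x) hyx] at hle
    linarith

theorem eventually_Htr_pos [NeZero μ] (hsupp : μ (Iic 0) = 0)
    (hint : ∀ x, IntegrableOn (fun y => y ^ α) (Iic x) μ) :
    ∀ᶠ x in atTop, 0 < Htr μ α x := by
  have hpos := ae_pos_of_measure_Iic_zero hsupp
  filter_upwards [(tendsto_measure_Iic_atTop μ).eventually_const_lt
    (Measure.measure_univ_pos.2 (NeZero.ne μ))] with x hx
  have hnonneg : 0 ≤ᵐ[μ.restrict (Iic x)] fun y => y ^ α :=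
    ae_restrict_of_ae (hpos.mono fun y hy => Real.rpow_nonneg hy.le α)
  refine (setIntegral_pos_iff_support_of_nonneg_ae hnonneg (hint x)).2 (hx.trans_le ?_)
  refine measure_mono_ae (hpos.mono fun y hy hyx => ⟨?_, hyx⟩)
  exact (Real.rpow_pos_of_pos hy α).ne'

theorem one_sub_distF [IsProbabilityMeasure μ] : 1 - distF μ x = μ.real (Ioi x) := by
  rw [← compl_Iic, probReal_compl_eq_one_sub measurableSet_Iic, distF, Measure.real]

end Measure

theorem stmt10_general {μ : Measure ℝ} [NeZero μ] (hsupp : μ (Iic 0) = 0) {α θ : ℝ}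
    (hα : 0 < α) (hθα : θ < α) (hint : Integrable (fun y => min 1 (y ^ α)) μ) :
    RegVary (Htr μ α) θ ↔
      Tendsto (fun x => x ^ α * μ.real (Ioi x) / Htr μ α x) atTop (𝓝 (θ / (α - θ))) := by
  have hmoment := isTruncatedMoment_Htr hsupp hα hint
  have htail : Tendsto (fun x => μ.real (Ioi x)) atTop (𝓝 0) :=
    tendsto_measureReal_Ioi_atTop (measure_Ioi_ne_top hα hint one_pos)
  have hpos := eventually_Htr_pos hsupp (integrableOn_rpow_Iic hsupp hα hint)
  exact ⟨hmoment.tendsto_of_regVary hα hθα htail hpos,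
    hmoment.regVary_of_tendsto hα hθα (fun _ => measureReal_nonneg) hpos⟩

theorem stmt10 (μ : Measure ℝ) [IsProbabilityMeasure μ] (hsupp : μ (Iic 0) = 0)
    (α θ : ℝ) (hα : 0 < α) (hθ : 0 ≤ θ) (hθα : θ < α) :
    RegVary (Htr μ α) θ ↔
      Tendsto (fun x => x ^ α * (1 - distF μ x) / Htr μ α x) atTop
        (𝓝 (θ / (α - θ))) := by
  simpa only [one_sub_distF] using
    stmt10_general hsupp hα hθα (integrable_min_one_rpow hsupp α)
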